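/- Let X be a random vector in ℝ^d with E[‖X‖²] < ∞, mean μ, and a (noncentered) elliptical density x ↦ C·g((x − μ)ᵀΣ⁻¹(x − μ)) with respect to Lebesgue measure, Σ positive definite. Assume that for every unit vector u ∈ ℝ^d, the projection Z_u = ⟨X − μ, u⟩ has a weakly symmetric log-concave density on ℝ. For a unit vector u and t ∈ ℝ with 0 < P(⟨X − μ, u⟩ ≤ t) < 1, define F(u, t) = ‖E[X·1_{A_{u,t}}(X)]‖²/P(X ∈ A_{u,t}) + ‖E[X·1_{A_{u,t}^c}(X)]‖²/P(X ∈ A_{u,t}^c), where A_{u,t} = {x ∈ ℝ^d : ⟨x − μ, u⟩ ≤ t}. Then for every fixed unit vector u and every admissible t, F(u, t) ≤ F(u, 0). -/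

import Mathlib

open MeasureTheory Real Set
open scoped RealInnerProductSpace

/-- The halfspace objective
`F(u,t) = ‖E[X·1_{A_{u,t}}]‖²/P(X ∈ A_{u,t}) + ‖E[X·1_{A_{u,t}^c}]‖²/P(X ∈ A_{u,t}^c)` where
`A_{u,t} = {x : ⟨x − μ, u⟩ ≤ t}`. -/
noncomputable def halfspaceObjective {Ω : Type*} [MeasurableSpace Ω] {d : ℕ}
    (P : Measure Ω) (X : Ω → EuclideanSpace ℝ (Fin d))
    (μ u : EuclideanSpace ℝ (Fin d)) (t : ℝ) : ℝ :=
  ‖∫ ω in {ω | ⟪X ω - μ, u⟫ ≤ t}, X ω ∂P‖ ^ 2 / (P {ω | ⟪X ω - μ, u⟫ ≤ t}).toReal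
    + ‖∫ ω in {ω | t < ⟪X ω - μ, u⟫}, X ω ∂P‖ ^ 2 / (P {ω | t < ⟪X ω - μ, u⟫}).toReal

/-!
Write `Z = ⟨X − μ, u⟩`. If the regression of `X − μ` on `Z` is linear, `E[X − μ | Z] = Z v`, then
`F(u, t) = ‖μ‖² + ‖v‖² E[Z; Z > t]² / (P(Z > t) P(Z ≤ t))`, so only the law of `Z` matters.
Linearity for elliptical laws follows from their invariance under the linear involution that fixes
`Σu` and negates `u^⊥`.

Let `φ` be the density of `Z`, `q(t) = P(Z > t)` and `h(t) = E[Z; Z > t]`. For `t ≥ 0` the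
derivative of `h² / (q (1 − q))` has the sign of `(h − t q)(1 − 2q) − t q`. As `Z` is log-concave,
its hazard rate `φ / q` is nondecreasing, whence `φ (h − t q) = φ ∫_t^∞ q ≤ q²` and, since
`q(0) = 1/2`, `q (1 − 2q) = 2 q ∫_0^t φ ≤ t φ`; multiplying these bounds shows that the derivative
is nonpositive. The case `t ≤ 0` follows by reflecting `Z`.
-/

open Filter Topology
open scoped ENNReal

section TailIntegral

/-- The tail integral `t ↦ ∫ₜ^∞ f`: the survival function when `f` is a probability density, the
truncated mean when `f` is `s` times such a density. -/
noncomputable def tailIntegral (f : ℝ → ℝ) (t : ℝ) : ℝ :=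
  ∫ s in Ioi t, f s

variable {f : ℝ → ℝ}

theorem tailIntegral_sub_tailIntegral (hf : Integrable f) (s t : ℝ) :
    tailIntegral f s - tailIntegral f t = ∫ x in s..t, f x := by
  rw [sub_eq_iff_eq_add]
  exact (intervalIntegral.integral_interval_add_Ioi' hf.intervalIntegrable hf.integrableOn).symm

theorem hasDerivAt_tailIntegral (hc : Continuous f) (hf : Integrable f) (t : ℝ) :
    HasDerivAt (tailIntegral f) (-f t) t := by
  have hsub : tailIntegral f = fun t => tailIntegral f 0 - ∫ x in (0 : ℝ)..t, f x := by
    funext t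
    rw [← tailIntegral_sub_tailIntegral hf, sub_sub_cancel]
  rw [hsub]
  exact (hc.integral_hasStrictDerivAt 0 t).hasDerivAt.const_sub _

theorem tendsto_tailIntegral_atTop (f : ℝ → ℝ) : Tendsto (tailIntegral f) atTop (𝓝 0) :=
  tendsto_integral_Ioi_zero tendsto_id

theorem tailIntegral_pos (hpos : ∀ s, 0 < f s) (hf : Integrable f) (t : ℝ) :
    0 < tailIntegral f t := by
  have hsupport : Function.support f = univ := by
    ext s
    simp [(hpos s).ne']
  refine (setIntegral_pos_iff_support_of_nonneg_ae
    (Eventually.of_forall fun s => (hpos s).le) hf.integrableOn).2 ?_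
  simp [hsupport]

theorem antitone_tailIntegral (hnonneg : ∀ s, 0 ≤ f s) (hf : Integrable f) :
    Antitone (tailIntegral f) := fun _ _ hst =>
  setIntegral_mono_set hf.integrableOn (Eventually.of_forall hnonneg)
    (Ioi_subset_Ioi hst).eventuallyLE

theorem integral_Iic_eq_sub_tailIntegral (hf : Integrable f) (t : ℝ) :
    ∫ s in Iic t, f s = (∫ s, f s) - tailIntegral f t :=
  eq_sub_of_add_eq (intervalIntegral.integral_Iic_add_Ioi hf.integrableOn hf.integrableOn)

theorem tailIntegral_comp_neg (f : ℝ → ℝ) (t : ℝ) :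
    tailIntegral (fun s => f (-s)) t = ∫ s in Iic (-t), f s :=
  integral_comp_neg_Ioi t f

theorem tailIntegral_eq_tailIntegral_comp_add (f : ℝ → ℝ) (t : ℝ) :
    tailIntegral f t = tailIntegral (fun x => f (t + x)) 0 := by
  have := (measurePreserving_add_left volume t).setIntegral_preimage_emb
    (measurableEmbedding_addLeft t) f (Ioi t)
  rw [preimage_const_add_Ioi, sub_self] at this
  exact this.symm

theorem mul_tailIntegral_le_tailIntegral_id_mul (hnonneg : ∀ s, 0 ≤ f s) (hf : Integrable f)
    (hf₁ : Integrable fun s => s * f s) (t : ℝ) :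
    t * tailIntegral f t ≤ tailIntegral (fun s => s * f s) t := by
  rw [tailIntegral, tailIntegral, ← integral_const_mul]
  refine setIntegral_mono_on (hf.const_mul t).integrableOn hf₁.integrableOn measurableSet_Ioi ?_
  exact fun s hs => mul_le_mul_of_nonneg_right (le_of_lt hs) (hnonneg s)

section Excess

variable (hc : Continuous f) (hnonneg : ∀ s, 0 ≤ f s) (hf : Integrable f)
  (hf₁ : Integrable fun s => s * f s)

include hc hf hf₁ in
theorem hasDerivAt_tailIntegral_id_mul_sub (t : ℝ) :
    HasDerivAt (fun t => tailIntegral (fun s => s * f s) t - t * tailIntegral f t)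
      (-tailIntegral f t) t := by
  refine ((hasDerivAt_tailIntegral (by fun_prop) hf₁ t).sub
    ((hasDerivAt_id t).mul (hasDerivAt_tailIntegral hc hf t))).congr_deriv ?_
  simp only [id_eq]
  ring

include hnonneg hf hf₁ in
theorem tendsto_tailIntegral_id_mul_sub_atTop :
    Tendsto (fun t => tailIntegral (fun s => s * f s) t - t * tailIntegral f t) atTop (𝓝 0) := by
  refine tendsto_of_tendsto_of_tendsto_of_le_of_le' tendsto_const_nhds
    (tendsto_tailIntegral_atTop fun s => s * f s)
    (Eventually.of_forall fun t =>
      sub_nonneg.2 (mul_tailIntegral_le_tailIntegral_id_mul hnonneg hf hf₁ t)) ?_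
  filter_upwards [eventually_ge_atTop 0] with t ht
  exact sub_le_self _ (mul_nonneg ht (setIntegral_nonneg measurableSet_Ioi fun s _ => hnonneg s))

include hc hnonneg hf hf₁

theorem integrableOn_Ioi_tailIntegral (t : ℝ) : IntegrableOn (tailIntegral f) (Ioi t) := by
  have hneg : IntegrableOn (fun s => -tailIntegral f s) (Ioi t) :=
    integrableOn_Ioi_deriv_of_nonpos' (fun s _ => hasDerivAt_tailIntegral_id_mul_sub hc hf hf₁ s)
      (fun s _ => neg_nonpos.2 (setIntegral_nonneg measurableSet_Ioi fun x _ => hnonneg x))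
      (tendsto_tailIntegral_id_mul_sub_atTop hnonneg hf hf₁)
  exact integrable_neg_iff.1 hneg

theorem tailIntegral_tailIntegral (t : ℝ) :
    tailIntegral (tailIntegral f) t
      = tailIntegral (fun s => s * f s) t - t * tailIntegral f t := by
  have hneg := integral_Ioi_of_hasDerivAt_of_nonpos' (a := t)
    (fun s _ => hasDerivAt_tailIntegral_id_mul_sub hc hf hf₁ s)
    (fun s _ => neg_nonpos.2 (setIntegral_nonneg measurableSet_Ioi fun x _ => hnonneg x))
    (tendsto_tailIntegral_id_mul_sub_atTop hnonneg hf hf₁)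
  rwa [integral_neg, zero_sub, neg_inj] at hneg

end Excess

end TailIntegral

section Hazard

/-- `φ` has a nondecreasing hazard rate `φ / tailIntegral φ`; cleared of denominators so that no
positivity of the tail is needed. -/
def HasMonotoneHazard (φ : ℝ → ℝ) : Prop :=
  ∀ ⦃s t : ℝ⦄, s ≤ t → φ s * tailIntegral φ t ≤ φ t * tailIntegral φ s

theorem add_le_add_of_convexOn {V : ℝ → ℝ} (hV : ConvexOn ℝ univ V) {s t x : ℝ} (hst : s ≤ t)
    (hx : 0 ≤ x) : V t + V (s + x) ≤ V s + V (t + x) := by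
  rcases hst.eq_or_lt with rfl | hst
  · rfl
  have hlen : 0 < t + x - s := by linarith
  obtain ⟨b, hb⟩ : ∃ b, b * (t + x - s) = t - s := ⟨_, div_mul_cancel₀ _ hlen.ne'⟩
  have hb₀ : 0 ≤ b := nonneg_of_mul_nonneg_left (by linarith) hlen
  have hb₁ : 0 ≤ 1 - b := nonneg_of_mul_nonneg_left (by linarith : 0 ≤ (1 - b) * (t + x - s)) hlen
  have ht := hV.2 (mem_univ s) (mem_univ (t + x)) hb₁ hb₀ (sub_add_cancel 1 b)
  have hsx := hV.2 (mem_univ s) (mem_univ (t + x)) hb₀ hb₁ (add_sub_cancel b 1)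
  simp only [smul_eq_mul] at ht hsx
  rw [show (1 - b) * s + b * (t + x) = t by linear_combination hb] at ht
  rw [show b * s + (1 - b) * (t + x) = s + x by linear_combination -hb] at hsx
  linarith

theorem hasMonotoneHazard_exp_neg {V : ℝ → ℝ} (hV : ConvexOn ℝ univ V)
    (hint : Integrable fun s => exp (-V s)) : HasMonotoneHazard fun s => exp (-V s) := by
  intro s t hst
  rw [tailIntegral_eq_tailIntegral_comp_add _ t, tailIntegral_eq_tailIntegral_comp_add _ s,
    tailIntegral, tailIntegral, ← integral_const_mul, ← integral_const_mul]
  refine setIntegral_mono_on ((hint.comp_add_left t).const_mul _).integrableOn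
    ((hint.comp_add_left s).const_mul _).integrableOn measurableSet_Ioi fun x hx => ?_
  rw [← exp_add, ← exp_add, exp_le_exp]
  linarith [add_le_add_of_convexOn hV hst (le_of_lt hx)]

variable {φ : ℝ → ℝ}

theorem HasMonotoneHazard.mul_tailIntegral_tailIntegral_le_sq (hφ : HasMonotoneHazard φ)
    (hc : Continuous φ) (hnonneg : ∀ s, 0 ≤ φ s) (hint : Integrable φ)
    (hint₁ : Integrable fun s => s * φ s) (t : ℝ) :
    φ t * tailIntegral (tailIntegral φ) t ≤ tailIntegral φ t ^ 2 := by
  calc φ t * tailIntegral (tailIntegral φ) t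
      = ∫ s in Ioi t, φ t * tailIntegral φ s := (integral_const_mul _ _).symm
    _ ≤ ∫ s in Ioi t, φ s * tailIntegral φ t :=
        setIntegral_mono_on
          ((integrableOn_Ioi_tailIntegral hc hnonneg hint hint₁ t).const_mul _)
          (hint.mul_const _).integrableOn measurableSet_Ioi fun s hs => hφ (le_of_lt hs)
    _ = tailIntegral φ t ^ 2 := by rw [integral_mul_const, sq, tailIntegral]

theorem HasMonotoneHazard.tailIntegral_mul_sub_le (hφ : HasMonotoneHazard φ)
    (hc : Continuous φ) (hnonneg : ∀ s, 0 ≤ φ s) (hint : Integrable φ) {t : ℝ} (ht : 0 ≤ t) :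
    tailIntegral φ t * (tailIntegral φ 0 - tailIntegral φ t) ≤ t * φ t * tailIntegral φ 0 := by
  calc tailIntegral φ t * (tailIntegral φ 0 - tailIntegral φ t)
      = ∫ s in (0 : ℝ)..t, φ s * tailIntegral φ t := by
        rw [tailIntegral_sub_tailIntegral hint, intervalIntegral.integral_mul_const, mul_comm]
    _ ≤ ∫ _ in (0 : ℝ)..t, φ t * tailIntegral φ 0 := by
        refine intervalIntegral.integral_mono_on ht ((hc.mul_const _).intervalIntegrable _ _)
          (continuous_const.intervalIntegrable _ _) fun s hs => (hφ hs.2).trans ?_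
        exact mul_le_mul_of_nonneg_left (antitone_tailIntegral hnonneg hint hs.1) (hnonneg t)
    _ = t * φ t * tailIntegral φ 0 := by
        rw [intervalIntegral.integral_const, sub_zero, smul_eq_mul, mul_assoc]

end Hazard

section SplitVariance

/-- For the density `φ` of a centered real random variable `Z`, the between-group variance of the
split at `t`, that is `Var E[Z | 1_{Z > t}] = E[Z; Z > t]² / (P(Z > t) P(Z ≤ t))`. -/
noncomputable def splitVariance (φ : ℝ → ℝ) (t : ℝ) : ℝ :=
  tailIntegral (fun s => s * φ s) t ^ 2 / (tailIntegral φ t * (1 - tailIntegral φ t))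

variable {φ : ℝ → ℝ}

theorem tailIntegral_lt_one (hpos : ∀ s, 0 < φ s) (hint : Integrable φ) (hone : ∫ s, φ s = 1)
    (t : ℝ) : tailIntegral φ t < 1 := by
  have hneg := tailIntegral_pos (fun s => hpos (-s)) hint.comp_neg (-t)
  rw [tailIntegral_comp_neg, neg_neg, integral_Iic_eq_sub_tailIntegral hint, hone] at hneg
  exact sub_pos.1 hneg

theorem splitVariance_comp_neg (hint : Integrable φ) (hint₁ : Integrable fun s => s * φ s)
    (hone : ∫ s, φ s = 1) (hmean : ∫ s, s * φ s = 0) (t : ℝ) :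
    splitVariance (fun s => φ (-s)) t = splitVariance φ (-t) := by
  have htail : tailIntegral (fun s => φ (-s)) t = 1 - tailIntegral φ (-t) := by
    rw [tailIntegral_comp_neg, integral_Iic_eq_sub_tailIntegral hint, hone]
  have hmoment : tailIntegral (fun s => s * φ (-s)) t
      = tailIntegral (fun s => s * φ s) (-t) := by
    have hneg := tailIntegral_comp_neg (fun s => s * φ s) t
    rw [integral_Iic_eq_sub_tailIntegral hint₁, hmean, zero_sub] at hneg
    simpa only [tailIntegral, neg_mul, integral_neg, neg_inj] using hneg
  rw [splitVariance, splitVariance, htail, hmoment, sub_sub_cancel, mul_comm (1 - _)]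

section

variable (hc : Continuous φ) (hpos : ∀ s, 0 < φ s) (hint : Integrable φ)
  (hint₁ : Integrable fun s => s * φ s)

include hc hpos hint hint₁

theorem hasDerivAt_splitVariance {t : ℝ} (hlt : tailIntegral φ t < 1) :
    HasDerivAt (splitVariance φ)
      (φ t * tailIntegral (fun s => s * φ s) t *
        (tailIntegral (fun s => s * φ s) t * (1 - 2 * tailIntegral φ t)
          - 2 * t * tailIntegral φ t * (1 - tailIntegral φ t))
        / (tailIntegral φ t * (1 - tailIntegral φ t)) ^ 2) t := by
  have hq := hasDerivAt_tailIntegral hc hint t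
  have hh := hasDerivAt_tailIntegral (by fun_prop) hint₁ t
  have hden := mul_pos (tailIntegral_pos hpos hint t) (sub_pos.2 hlt)
  refine ((hh.pow 2).div (hq.mul (hq.const_sub 1)) hden.ne').congr_deriv ?_
  simp only [Pi.mul_apply, Pi.pow_apply]
  ring

variable (hφ : HasMonotoneHazard φ) (hmedian : tailIntegral φ 0 = 1 / 2)

include hφ hmedian

theorem tailIntegral_id_mul_mul_le {t : ℝ} (ht : 0 ≤ t) :
    tailIntegral (fun s => s * φ s) t * (1 - 2 * tailIntegral φ t)
      ≤ 2 * t * tailIntegral φ t * (1 - tailIntegral φ t) := by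
  have hnonneg : ∀ s, 0 ≤ φ s := fun s => (hpos s).le
  have hexcess := tailIntegral_tailIntegral hc hnonneg hint hint₁ t
  have hexcess_le := hφ.mul_tailIntegral_tailIntegral_le_sq hc hnonneg hint hint₁ t
  have hmass_le := hφ.tailIntegral_mul_sub_le hc hnonneg hint ht
  have hle_median := antitone_tailIntegral hnonneg hint ht
  have hq := tailIntegral_pos hpos hint t
  rw [hmedian] at hmass_le hle_median
  set q := tailIntegral φ t
  set r := tailIntegral (tailIntegral φ) t
  have hr : r * (1 - 2 * q) ≤ t * q := by
    refine le_of_mul_le_mul_left ?_ (hpos t)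
    calc φ t * (r * (1 - 2 * q)) = φ t * r * (1 - 2 * q) := by ring
      _ ≤ q ^ 2 * (1 - 2 * q) := mul_le_mul_of_nonneg_right hexcess_le (by linarith)
      _ = q * (2 * (q * (1 / 2 - q))) := by ring
      _ ≤ q * (2 * (t * φ t * (1 / 2))) := by gcongr
      _ = φ t * (t * q) := by ring
  linear_combination hr - (1 - 2 * q) * hexcess

theorem antitoneOn_splitVariance : AntitoneOn (splitVariance φ) (Ici 0) := by
  have hnonneg : ∀ s, 0 ≤ φ s := fun s => (hpos s).le
  have hlt : ∀ t, 0 ≤ t → tailIntegral φ t < 1 := fun t ht => by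
    linarith [antitone_tailIntegral hnonneg hint ht]
  have hderiv := fun t ht => hasDerivAt_splitVariance hc hpos hint hint₁ (hlt t ht)
  refine antitoneOn_of_hasDerivWithinAt_nonpos (convex_Ici 0)
    (fun t ht => (hderiv t ht).continuousAt.continuousWithinAt)
    (fun t ht => (hderiv t (interior_subset ht)).hasDerivWithinAt) fun t ht => ?_
  have ht : 0 ≤ t := interior_subset ht
  have hmoment : 0 ≤ tailIntegral (fun s => s * φ s) t :=
    (mul_nonneg ht (tailIntegral_pos hpos hint t).le).trans
      (mul_tailIntegral_le_tailIntegral_id_mul hnonneg hint hint₁ t)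
  exact div_nonpos_of_nonpos_of_nonneg
    (mul_nonpos_of_nonneg_of_nonpos (mul_nonneg (hnonneg t) hmoment)
      (sub_nonpos.2 (tailIntegral_id_mul_mul_le hc hpos hint hint₁ hφ hmedian ht)))
    (sq_nonneg _)

theorem splitVariance_le_splitVariance_zero (hφ_neg : HasMonotoneHazard fun s => φ (-s))
    (hone : ∫ s, φ s = 1) (hmean : ∫ s, s * φ s = 0) (t : ℝ) :
    splitVariance φ t ≤ splitVariance φ 0 := by
  rcases le_total 0 t with ht | ht
  · exact antitoneOn_splitVariance hc hpos hint hint₁ hφ hmedian self_mem_Ici ht ht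
  · have hmedian_neg : tailIntegral (fun s => φ (-s)) 0 = 1 / 2 := by
      rw [tailIntegral_comp_neg, neg_zero, integral_Iic_eq_sub_tailIntegral hint, hone, hmedian]
      norm_num
    have hint₁_neg : Integrable fun s => s * φ (-s) := by simpa using hint₁.comp_neg.neg
    have hanti := antitoneOn_splitVariance (φ := fun s => φ (-s)) (by fun_prop) (fun s => hpos (-s))
      hint.comp_neg hint₁_neg hφ_neg hmedian_neg self_mem_Ici
      (neg_nonneg.2 ht) (neg_nonneg.2 ht)
    simpa only [splitVariance_comp_neg hint hint₁ hone hmean, neg_neg, neg_zero] using hanti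

end

end SplitVariance

section Density

variable {Ω : Type*} [MeasurableSpace Ω] {P : Measure Ω} {Z : Ω → ℝ} {φ : ℝ → ℝ}

theorem setIntegral_comp_eq_setIntegral_mul (hZ : Measurable Z) (hφ : Measurable φ)
    (hnonneg : ∀ s, 0 ≤ φ s)
    (hlaw : P.map Z = volume.withDensity fun s => ENNReal.ofReal (φ s)) {k : ℝ → ℝ}
    (hk : Measurable k) {B : Set ℝ} (hB : MeasurableSet B) :
    ∫ ω in Z ⁻¹' B, k (Z ω) ∂P = ∫ s in B, k s * φ s := by
  rw [← setIntegral_map hB hk.aestronglyMeasurable hZ.aemeasurable, hlaw,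
    setIntegral_withDensity_eq_setIntegral_toReal_smul hφ.ennreal_ofReal
      (Eventually.of_forall fun s => ENNReal.ofReal_lt_top) k hB]
  simp only [ENNReal.toReal_ofReal (hnonneg _), smul_eq_mul, mul_comm]

theorem integrable_mul_of_integrable_comp (hZ : Measurable Z) (hφ : Measurable φ)
    (hnonneg : ∀ s, 0 ≤ φ s)
    (hlaw : P.map Z = volume.withDensity fun s => ENNReal.ofReal (φ s)) {k : ℝ → ℝ}
    (hk : Measurable k) (hkZ : Integrable (fun ω => k (Z ω)) P) :
    Integrable fun s => k s * φ s := by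
  have hmap := (integrable_map_measure hk.aestronglyMeasurable hZ.aemeasurable).2 hkZ
  rw [hlaw, integrable_withDensity_iff_integrable_smul' hφ.ennreal_ofReal
    (Eventually.of_forall fun s => ENNReal.ofReal_lt_top)] at hmap
  simpa only [ENNReal.toReal_ofReal (hnonneg _), smul_eq_mul, mul_comm] using hmap

theorem integrable_of_map_eq_withDensity [IsFiniteMeasure P] (hZ : Measurable Z)
    (hφ : Measurable φ) (hnonneg : ∀ s, 0 ≤ φ s)
    (hlaw : P.map Z = volume.withDensity fun s => ENNReal.ofReal (φ s)) : Integrable φ := by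
  simpa only [one_mul] using
    integrable_mul_of_integrable_comp hZ hφ hnonneg hlaw measurable_const (integrable_const 1)

theorem measureReal_preimage_eq_setIntegral (hZ : Measurable Z) (hφ : Measurable φ)
    (hnonneg : ∀ s, 0 ≤ φ s)
    (hlaw : P.map Z = volume.withDensity fun s => ENNReal.ofReal (φ s)) {B : Set ℝ}
    (hB : MeasurableSet B) : P.real (Z ⁻¹' B) = ∫ s in B, φ s := by
  simpa only [setIntegral_const, smul_eq_mul, mul_one, one_mul] using
    setIntegral_comp_eq_setIntegral_mul hZ hφ hnonneg hlaw (k := fun _ => 1) measurable_const hB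

theorem integral_eq_one_of_map_eq_withDensity [IsProbabilityMeasure P] (hZ : Measurable Z)
    (hφ : Measurable φ) (hnonneg : ∀ s, 0 ≤ φ s)
    (hlaw : P.map Z = volume.withDensity fun s => ENNReal.ofReal (φ s)) : ∫ s, φ s = 1 := by
  rw [← setIntegral_univ, ← measureReal_preimage_eq_setIntegral hZ hφ hnonneg hlaw .univ,
    preimage_univ, probReal_univ]

theorem splitVariance_exp_neg_le_splitVariance_zero [IsProbabilityMeasure P] (hZ : Measurable Z)
    (hZ_int : Integrable Z P) (hmean : ∫ ω, Z ω ∂P = 0) {V : ℝ → ℝ} (hV : ConvexOn ℝ univ V)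
    (hlaw : P.map Z = volume.withDensity fun s => ENNReal.ofReal (exp (-V s)))
    (hmedian : P {ω | Z ω ≤ 0} = 1 / 2) (t : ℝ) :
    splitVariance (fun s => exp (-V s)) t ≤ splitVariance (fun s => exp (-V s)) 0 := by
  have hVc : Continuous V := continuousOn_univ.1 (hV.continuousOn isOpen_univ)
  have hφ : Measurable fun s => exp (-V s) := by fun_prop
  have hnonneg : ∀ s, 0 ≤ exp (-V s) := fun s => (exp_pos _).le
  have hint := integrable_of_map_eq_withDensity hZ hφ hnonneg hlaw
  have hone := integral_eq_one_of_map_eq_withDensity hZ hφ hnonneg hlaw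
  have hmean_density : ∫ s, s * exp (-V s) = 0 := by
    have hmoment := setIntegral_comp_eq_setIntegral_mul hZ hφ hnonneg hlaw measurable_id .univ
    simpa only [preimage_univ, setIntegral_univ, id_eq, hmean] using hmoment.symm
  have htail : tailIntegral (fun s => exp (-V s)) 0 = 1 / 2 := by
    have hhalf : ∫ s in Iic 0, exp (-V s) = 1 / 2 := by
      rw [← measureReal_preimage_eq_setIntegral hZ hφ hnonneg hlaw measurableSet_Iic,
        measureReal_def, show Z ⁻¹' Iic 0 = {ω | Z ω ≤ 0} from rfl, hmedian]
      norm_num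
    rw [integral_Iic_eq_sub_tailIntegral hint, hone] at hhalf
    linarith
  have hV_neg : ConvexOn ℝ univ fun s => V (-s) := by
    simpa using! hV.comp_linearMap (-LinearMap.id)
  exact splitVariance_le_splitVariance_zero (by fun_prop) (fun s => exp_pos _) hint
    (integrable_mul_of_integrable_comp hZ hφ hnonneg hlaw measurable_id hZ_int)
    (hasMonotoneHazard_exp_neg hV hint) htail (hasMonotoneHazard_exp_neg hV_neg hint.comp_neg)
    hone hmean_density t

end Density

section Regression

variable {E : Type*} [NormedAddCommGroup E] [InnerProductSpace ℝ E]

/-- The linear involution `y ↦ 2⟨u, y⟩v − y`, for `⟨v, u⟩ = 1`: it fixes the line `ℝv` and negates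
`u^⊥`. -/
noncomputable def obliqueReflection (u v : E) : E →L[ℝ] E :=
  ((2 : ℝ) • innerSL ℝ u).smulRight v - ContinuousLinearMap.id ℝ E

theorem obliqueReflection_apply (u v y : E) :
    obliqueReflection u v y = (2 * ⟪y, u⟫) • v - y := by
  simp [obliqueReflection, real_inner_comm]

theorem inner_obliqueReflection {u v : E} (hvu : ⟪v, u⟫ = 1) (y : E) :
    ⟪obliqueReflection u v y, u⟫ = ⟪y, u⟫ := by
  rw [obliqueReflection_apply, inner_sub_left, real_inner_smul_left, hvu]
  ring

theorem obliqueReflection_obliqueReflection {u v : E} (hvu : ⟪v, u⟫ = 1) (y : E) :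
    obliqueReflection u v (obliqueReflection u v y) = y := by
  rw [obliqueReflection_apply u v (obliqueReflection u v y), inner_obliqueReflection hvu,
    obliqueReflection_apply, sub_sub_cancel]

theorem inner_obliqueReflection_map_obliqueReflection {u v : E} (hvu : ⟪v, u⟫ = 1)
    {B : E →ₗ[ℝ] E} (hB : B.IsSymmetric) {k : ℝ} (hBv : B v = k • u) (y : E) :
    ⟪obliqueReflection u v y, B (obliqueReflection u v y)⟫ = ⟪y, B y⟫ := by
  have hvBy : ⟪v, B y⟫ = k * ⟪y, u⟫ := by
    rw [← hB, hBv, real_inner_smul_left, real_inner_comm]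
  simp only [obliqueReflection_apply, map_sub, map_smul, hBv, inner_sub_left, inner_sub_right,
    real_inner_smul_left, real_inner_smul_right, hvBy, hvu]
  ring

variable [MeasurableSpace E] [BorelSpace E]

theorem condExp_inner_eq_smul [CompleteSpace E] [SecondCountableTopology E] {Ω : Type*}
    [MeasurableSpace Ω] {P : Measure Ω} [IsFiniteMeasure P] {Y : Ω → E} (hYm : Measurable Y)
    (hY : Integrable Y P) {u v : E} (hvu : ⟪v, u⟫ = 1)
    (hinv : P.map (fun ω => obliqueReflection u v (Y ω)) = P.map Y) :
    P[Y | MeasurableSpace.comap (fun ω => ⟪Y ω, u⟫) inferInstance]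
      =ᵐ[P] fun ω => ⟪Y ω, u⟫ • v := by
  have hZ : Measurable fun ω => ⟪Y ω, u⟫ := by fun_prop
  have hZv : Integrable (fun ω => ⟪Y ω, u⟫ • v) P := (hY.inner_const u).smul_const v
  refine (ae_eq_condExp_of_forall_setIntegral_eq hZ.comap_le hY (fun _ _ _ => hZv.integrableOn)
    ?_ ?_).symm
  · rintro _ ⟨B, hB, rfl⟩ -
    set A := (fun ω => ⟪Y ω, u⟫) ⁻¹' B
    have hK : MeasurableSet {y : E | ⟪y, u⟫ ∈ B} :=
      (by fun_prop : Measurable fun y : E => ⟪y, u⟫) hB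
    have hreflect : ∫ ω in A, obliqueReflection u v (Y ω) ∂P = ∫ ω in A, Y ω ∂P := by
      have hTY : Measurable fun ω => obliqueReflection u v (Y ω) := by fun_prop
      have hpre : (fun ω => obliqueReflection u v (Y ω)) ⁻¹' {y | ⟪y, u⟫ ∈ B} = A := by
        ext ω
        simp [A, inner_obliqueReflection hvu]
      calc ∫ ω in A, obliqueReflection u v (Y ω) ∂P
          = ∫ y in {y | ⟪y, u⟫ ∈ B}, y ∂P.map (fun ω => obliqueReflection u v (Y ω)) := by
            rw [setIntegral_map hK (by fun_prop) hTY.aemeasurable, hpre]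
        _ = ∫ ω in A, Y ω ∂P := by
            rw [hinv, setIntegral_map hK (by fun_prop) hYm.aemeasurable]
            rfl
    have hdouble : Integrable (fun ω => (2 : ℝ) • ⟪Y ω, u⟫ • v) P := hZv.smul (2 : ℝ)
    simp only [obliqueReflection_apply, mul_smul] at hreflect
    rw [integral_sub hdouble.integrableOn hY.integrableOn, integral_smul, sub_eq_iff_eq_add,
      ← two_smul ℝ] at hreflect
    exact smul_right_injective E (two_ne_zero (α := ℝ)) hreflect
  · exact ((comap_measurable _).stronglyMeasurable.smul_const v).aestronglyMeasurable

theorem measurePreserving_of_involutive [FiniteDimensional ℝ E] (ν : Measure E)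
    [ν.IsAddHaarMeasure] {T : E →ₗ[ℝ] E} (hT : ∀ y, T (T y) = y) : MeasurePreserving T ν ν := by
  refine ⟨T.continuous_of_finiteDimensional.measurable, ?_⟩
  have hdet : LinearMap.det T * LinearMap.det T = 1 := by
    rw [← LinearMap.det_comp, show T ∘ₗ T = LinearMap.id from LinearMap.ext hT, LinearMap.det_id]
  have habs : |(LinearMap.det T)⁻¹| = 1 := by
    rcases mul_self_eq_one_iff.1 hdet with h | h <;> simp [h]
  rw [Measure.map_linearMap_addHaar_eq_smul_addHaar ν (left_ne_zero_of_mul_eq_one hdet), habs,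
    ENNReal.ofReal_one, one_smul]

end Regression

theorem map_withDensity_comp {α β : Type*} [MeasurableSpace α] [MeasurableSpace β]
    {ν : Measure α} {ρ : Measure β} {e : α → β} (he : MeasurePreserving e ν ρ)
    (hemb : MeasurableEmbedding e) (f : β → ℝ≥0∞) :
    (ν.withDensity fun x => f (e x)).map e = ρ.withDensity f := by
  ext s hs
  rw [Measure.map_apply he.measurable hs, withDensity_apply _ (he.measurable hs),
    withDensity_apply _ hs]
  exact he.setLIntegral_comp_preimage_emb hemb f s

section Elliptical

variable {Ω : Type*} [MeasurableSpace Ω] {P : Measure Ω} {d : ℕ}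
  {X : Ω → EuclideanSpace ℝ (Fin d)} {μ u : EuclideanSpace ℝ (Fin d)}
  {S : Matrix (Fin d) (Fin d) ℝ} {ψ : ℝ → ℝ≥0∞}

theorem inner_toEuclideanLin_pos (hS : S.PosDef) (hu : u ≠ 0) :
    0 < ⟪Matrix.toEuclideanLin S u, u⟫ := by
  have hpos := hS.dotProduct_mulVec_pos (x := u.ofLp) (by simpa using hu)
  rw [real_inner_comm, EuclideanSpace.inner_eq_star_dotProduct, dotProduct_comm]
  simpa [Matrix.ofLp_toLpLin] using hpos

theorem toEuclideanLin_inv_apply_toEuclideanLin (hS : IsUnit S.det)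
    (y : EuclideanSpace ℝ (Fin d)) :
    Matrix.toEuclideanLin S⁻¹ (Matrix.toEuclideanLin S y) = y := by
  ext i
  simp [Matrix.toLpLin_apply, Matrix.mulVec_mulVec, Matrix.nonsing_inv_mul S hS]

theorem map_sub_eq_withDensity (hX : Measurable X)
    (hdens : P.map X
      = volume.withDensity fun x => ψ ⟪x - μ, Matrix.toEuclideanLin S⁻¹ (x - μ)⟫) :
    P.map (fun ω => X ω - μ)
      = volume.withDensity fun y => ψ ⟪y, Matrix.toEuclideanLin S⁻¹ y⟫ := by
  have hshift := map_withDensity_comp (measurePreserving_sub_right volume μ)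
    (MeasurableEquiv.subRight μ).measurableEmbedding
    fun y => ψ ⟪y, Matrix.toEuclideanLin S⁻¹ y⟫
  rwa [← hdens, Measure.map_map (measurable_sub_const μ) hX] at hshift

theorem map_obliqueReflection_sub (hX : Measurable X)
    (hdens : P.map X
      = volume.withDensity fun x => ψ ⟪x - μ, Matrix.toEuclideanLin S⁻¹ (x - μ)⟫)
    {v : EuclideanSpace ℝ (Fin d)} (hvu : ⟪v, u⟫ = 1) (hS : S.IsHermitian) {k : ℝ}
    (hv : Matrix.toEuclideanLin S⁻¹ v = k • u) :
    P.map (fun ω => obliqueReflection u v (X ω - μ)) = P.map (fun ω => X ω - μ) := by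
  set T := obliqueReflection u v
  have hT : ∀ y, T (T y) = y := obliqueReflection_obliqueReflection hvu
  have hsymm : (Matrix.toEuclideanLin S⁻¹).IsSymmetric :=
    Matrix.isSymmetric_toEuclideanLin_iff.2 hS.inv
  have hemb : MeasurableEmbedding T :=
    (ContinuousLinearEquiv.equivOfInverse T T hT hT).toHomeomorph.measurableEmbedding
  have hpres : MeasurePreserving T volume volume :=
    measurePreserving_of_involutive volume (T := T.toLinearMap) hT
  have hmap := map_withDensity_comp hpres hemb fun y => ψ ⟪y, Matrix.toEuclideanLin S⁻¹ y⟫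
  simp only [T, inner_obliqueReflection_map_obliqueReflection hvu hsymm hv] at hmap
  rwa [← map_sub_eq_withDensity hX hdens,
    Measure.map_map T.continuous.measurable (hX.sub_const μ)] at hmap

theorem condExp_inner_eq_smul_of_elliptical [IsFiniteMeasure P] (hX : Measurable X)
    (hint : Integrable X P) (hS : S.PosDef)
    (hdens : P.map X
      = volume.withDensity fun x => ψ ⟪x - μ, Matrix.toEuclideanLin S⁻¹ (x - μ)⟫)
    (hu : u ≠ 0) :
    P[fun ω => X ω - μ | MeasurableSpace.comap (fun ω => ⟪X ω - μ, u⟫) inferInstance]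
      =ᵐ[P] fun ω => ⟪X ω - μ, u⟫ •
        (⟪Matrix.toEuclideanLin S u, u⟫⁻¹ • Matrix.toEuclideanLin S u) := by
  have hvu : ⟪⟪Matrix.toEuclideanLin S u, u⟫⁻¹ • Matrix.toEuclideanLin S u, u⟫ = 1 := by
    rw [real_inner_smul_left, inv_mul_cancel₀ (inner_toEuclideanLin_pos hS hu).ne']
  refine condExp_inner_eq_smul (hX.sub_const μ) (hint.sub (integrable_const μ)) hvu
    (map_obliqueReflection_sub hX hdens hvu hS.isHermitian
      (k := ⟪Matrix.toEuclideanLin S u, u⟫⁻¹) ?_)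
  rw [map_smul, toEuclideanLin_inv_apply_toEuclideanLin hS.det_pos.ne'.isUnit]

end Elliptical

section HalfspaceObjective

variable {Ω : Type*} [MeasurableSpace Ω] {d : ℕ} {P : Measure Ω} [IsProbabilityMeasure P]
  {X : Ω → EuclideanSpace ℝ (Fin d)} {μ u v : EuclideanSpace ℝ (Fin d)}

theorem integral_sub_mean_eq_zero {E : Type*} [NormedAddCommGroup E] [NormedSpace ℝ E]
    [CompleteSpace E] {Y : Ω → E} (hY : Integrable Y P) {m : E} (hm : m = ∫ ω, Y ω ∂P) :
    ∫ ω, (Y ω - m) ∂P = 0 := by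
  rw [integral_sub hY (integrable_const _), integral_const, probReal_univ, one_smul, ← hm, sub_self]

theorem norm_add_smul_sq_div_add {E : Type*} [NormedAddCommGroup E] [InnerProductSpace ℝ E]
    (m a : E) {p : ℝ} (hp₀ : p ≠ 0) (hp₁ : 1 - p ≠ 0) :
    ‖-m + (1 - p) • a‖ ^ 2 / (1 - p) + ‖m + p • a‖ ^ 2 / p
      = ‖a‖ ^ 2 + ‖m‖ ^ 2 / (p * (1 - p)) := by
  have hexpand : ∀ (n : E) (c : ℝ),
      ‖n + c • a‖ ^ 2 = ‖n‖ ^ 2 + 2 * (c * ⟪n, a⟫) + c ^ 2 * ‖a‖ ^ 2 := fun n c => by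
    rw [norm_add_sq_real, real_inner_smul_right, norm_smul, mul_pow, norm_eq_abs, sq_abs]
  rw [hexpand, hexpand, norm_neg, inner_neg_left]
  field_simp
  ring

theorem halfspaceObjective_eq_add_div (hX : Measurable X) (hint : Integrable X P)
    (hμ : μ = ∫ ω, X ω ∂P) {t : ℝ} (hp₀ : P.real {ω | t < ⟪X ω - μ, u⟫} ≠ 0)
    (hp₁ : 1 - P.real {ω | t < ⟪X ω - μ, u⟫} ≠ 0) :
    halfspaceObjective P X μ u t
      = ‖μ‖ ^ 2 + ‖∫ ω in {ω | t < ⟪X ω - μ, u⟫}, (X ω - μ) ∂P‖ ^ 2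
        / (P.real {ω | t < ⟪X ω - μ, u⟫} * (1 - P.real {ω | t < ⟪X ω - μ, u⟫})) := by
  set A := {ω | t < ⟪X ω - μ, u⟫} with hA_def
  have hA : MeasurableSet A := measurableSet_lt measurable_const (by fun_prop)
  have hcompl : {ω | ⟪X ω - μ, u⟫ ≤ t} = Aᶜ := by
    ext ω
    simp [A]
  have hsub : Integrable (fun ω => X ω - μ) P := hint.sub (integrable_const μ)
  have hrecenter : ∀ B, ∫ ω in B, X ω ∂P = ∫ ω in B, (X ω - μ) ∂P + P.real B • μ := fun B => by
    rw [integral_sub hint.integrableOn (integrable_const _), setIntegral_const, sub_add_cancel]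
  have hneg : ∫ ω in Aᶜ, (X ω - μ) ∂P = -∫ ω in A, (X ω - μ) ∂P := by
    rw [setIntegral_compl hA hsub, integral_sub_mean_eq_zero hint hμ, zero_sub]
  rw [halfspaceObjective, hcompl, ← hA_def, ← measureReal_def, ← measureReal_def, hrecenter,
    hrecenter A, hneg, probReal_compl_eq_one_sub hA]
  exact norm_add_smul_sq_div_add _ μ hp₀ hp₁

theorem halfspaceObjective_eq_add_splitVariance (hX : Measurable X) (hint : Integrable X P)
    (hμ : μ = ∫ ω, X ω ∂P)
    (hreg : P[fun ω => X ω - μ | MeasurableSpace.comap (fun ω => ⟪X ω - μ, u⟫) inferInstance]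
      =ᵐ[P] fun ω => ⟪X ω - μ, u⟫ • v)
    {φ : ℝ → ℝ} (hφ : Measurable φ) (hpos : ∀ s, 0 < φ s)
    (hlaw : P.map (fun ω => ⟪X ω - μ, u⟫) = volume.withDensity fun s => ENNReal.ofReal (φ s))
    (t : ℝ) :
    halfspaceObjective P X μ u t = ‖μ‖ ^ 2 + ‖v‖ ^ 2 * splitVariance φ t := by
  have hZ : Measurable fun ω => ⟪X ω - μ, u⟫ := by fun_prop
  have hnonneg : ∀ s, 0 ≤ φ s := fun s => (hpos s).le
  have hint_density := integrable_of_map_eq_withDensity hZ hφ hnonneg hlaw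
  have hone := integral_eq_one_of_map_eq_withDensity hZ hφ hnonneg hlaw
  have hmass : P.real {ω | t < ⟪X ω - μ, u⟫} = tailIntegral φ t :=
    measureReal_preimage_eq_setIntegral hZ hφ hnonneg hlaw measurableSet_Ioi
  have hmoment : ∫ ω in {ω | t < ⟪X ω - μ, u⟫}, ⟪X ω - μ, u⟫ ∂P
      = tailIntegral (fun s => s * φ s) t :=
    setIntegral_comp_eq_setIntegral_mul hZ hφ hnonneg hlaw measurable_id measurableSet_Ioi
  have hvector : ∫ ω in {ω | t < ⟪X ω - μ, u⟫}, (X ω - μ) ∂P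
      = tailIntegral (fun s => s * φ s) t • v := by
    rw [← hmoment, ← integral_smul_const]
    exact (setIntegral_condExp hZ.comap_le (hint.sub (integrable_const μ))
      ⟨Ioi t, measurableSet_Ioi, rfl⟩).symm.trans (integral_congr_ae (ae_restrict_of_ae hreg))
  have hp₀ : P.real {ω | t < ⟪X ω - μ, u⟫} ≠ 0 := by
    rw [hmass]
    exact (tailIntegral_pos hpos hint_density t).ne'
  have hp₁ : 1 - P.real {ω | t < ⟪X ω - μ, u⟫} ≠ 0 := by
    rw [hmass]
    exact (sub_pos.2 (tailIntegral_lt_one hpos hint_density hone t)).ne'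
  rw [halfspaceObjective_eq_add_div hX hint hμ hp₀ hp₁, hvector, hmass, norm_smul, splitVariance,
    mul_pow, norm_eq_abs, sq_abs]
  ring

end HalfspaceObjective

theorem halfspace_objective_maximized_at_mean_general {Ω : Type*} [MeasurableSpace Ω] {d : ℕ}
    (P : Measure Ω) [IsProbabilityMeasure P]
    (X : Ω → EuclideanSpace ℝ (Fin d)) (hX : Measurable X) (hint : Integrable X P)
    (μ : EuclideanSpace ℝ (Fin d)) (hμ : μ = ∫ ω, X ω ∂P) (u v : EuclideanSpace ℝ (Fin d))
    (hreg : P[fun ω => X ω - μ | MeasurableSpace.comap (fun ω => ⟪X ω - μ, u⟫) inferInstance]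
      =ᵐ[P] fun ω => ⟪X ω - μ, u⟫ • v)
    (V : ℝ → ℝ) (hV : ConvexOn ℝ univ V)
    (hlaw : P.map (fun ω => ⟪X ω - μ, u⟫)
      = volume.withDensity fun s => ENNReal.ofReal (exp (-V s)))
    (hmedian : P {ω | ⟪X ω - μ, u⟫ ≤ ∫ ω', ⟪X ω' - μ, u⟫ ∂P} = 1 / 2) (t : ℝ) :
    halfspaceObjective P X μ u t ≤ halfspaceObjective P X μ u 0 := by
  have hZ : Measurable fun ω => ⟪X ω - μ, u⟫ := by fun_prop
  have hsub : Integrable (fun ω => X ω - μ) P := hint.sub (integrable_const μ)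
  have hmean : ∫ ω, ⟪X ω - μ, u⟫ ∂P = 0 := by
    simp_rw [real_inner_comm u]
    rw [integral_inner hsub, integral_sub_mean_eq_zero hint hμ, inner_zero_right]
  have hV_meas : Measurable V := (continuousOn_univ.1 (hV.continuousOn isOpen_univ)).measurable
  have hobjective := halfspaceObjective_eq_add_splitVariance hX hint hμ hreg
    (by fun_prop : Measurable fun s => exp (-V s)) (fun s => exp_pos _) hlaw
  rw [hmean] at hmedian
  rw [hobjective t, hobjective 0]
  gcongr
  exact splitVariance_exp_neg_le_splitVariance_zero hZ (hsub.inner_const u) hmean hV hlaw hmedian t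

/-- for an elliptical random vector `X` in `ℝ^d` with mean `μ`,
positive definite scatter matrix `Σ`, `E[‖X‖²] < ∞`, such that every projection
`⟨X − μ, u⟩` (for unit `u`) has a weakly symmetric log-concave density, the halfspace
objective satisfies `F(u, t) ≤ F(u, 0)` for every unit `u` and every admissible `t`. -/
theorem halfspace_objective_maximized_at_mean {Ω : Type*} [MeasurableSpace Ω] {d : ℕ}
    (P : Measure Ω) [IsProbabilityMeasure P]
    (X : Ω → EuclideanSpace ℝ (Fin d)) (hX : Measurable X)
    (hX2 : Integrable (fun ω => ‖X ω‖ ^ 2) P)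
    (μ : EuclideanSpace ℝ (Fin d)) (hμ : μ = ∫ ω, X ω ∂P)
    (S : Matrix (Fin d) (Fin d) ℝ) (hS : S.PosDef)
    (g : ℝ → ℝ) (hg : ∀ s, 0 ≤ g s) (C : ℝ) (hC : 0 < C)
    (hdens : Measure.map X P = volume.withDensity
      (fun x => ENNReal.ofReal (C * g ⟪x - μ, Matrix.toEuclideanLin S⁻¹ (x - μ)⟫)))
    (hproj : ∀ u : EuclideanSpace ℝ (Fin d), ‖u‖ = 1 →
      ∃ V : ℝ → ℝ, ConvexOn ℝ Set.univ V
        ∧ Measure.map (fun ω => ⟪X ω - μ, u⟫) P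
            = volume.withDensity (fun s => ENNReal.ofReal (Real.exp (-V s)))
        ∧ P {ω | ⟪X ω - μ, u⟫ ≤ ∫ ω', ⟪X ω' - μ, u⟫ ∂P} = 1 / 2) :
    ∀ u : EuclideanSpace ℝ (Fin d), ‖u‖ = 1 →
      ∀ t : ℝ, 0 < P {ω | ⟪X ω - μ, u⟫ ≤ t} → P {ω | ⟪X ω - μ, u⟫ ≤ t} < 1 →
        halfspaceObjective P X μ u t ≤ halfspaceObjective P X μ u 0 := by
  intro u hu t _ _
  obtain ⟨V, hV, hlaw, hmedian⟩ := hproj u hu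
  have hint : Integrable X P :=
    ((memLp_two_iff_integrable_sq_norm hX.aestronglyMeasurable).2 hX2).integrable one_le_two
  have hu₀ : u ≠ 0 := norm_ne_zero_iff.1 (hu ▸ one_ne_zero)
  exact halfspace_objective_maximized_at_mean_general P X hX hint μ hμ u _
    (condExp_inner_eq_smul_of_elliptical (ψ := fun s => ENNReal.ofReal (C * g s)) hX hint hS hdens
      hu₀) V hV hlaw hmedian t
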